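/- Let n, r ≥ 1 and let A, A' : sl(n,ℂ) → M_r(ℂ) be two Lie algebra homomorphisms, and let ∇, ∇' be the corresponding flat noncommutative connections on the right M_n(ℂ)-module M_{r,n}(ℂ), given by ∇_{ad_γ} m = −mγ + A(γ)m and ∇'_{ad_γ} m = −mγ + A'(γ)m. Then ∇ and ∇' are in the same gauge orbit (i.e. there is a right-module automorphism Φ of M_{r,n}(ℂ) with ∇'_X = Φ⁻¹∘∇_X∘Φ for all derivations X) if and only if the representations A and A' are equivalent, i.e. there exists g ∈ GL_r(ℂ) with A'(γ) = g⁻¹ A(γ) g for all γ ∈ sl(n,ℂ). -/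

import Mathlib

/-!
Right-module endomorphisms of `M_{r,n}(ℂ)` are left multiplications by `r × r` matrices
(`exists_left_mul`), so a gauge transformation `Φ` is `m ↦ g m` with `g` invertible. Under it, the
term `-(m γ)` of the connection is unchanged and `A γ` becomes `g⁻¹ (A γ) g`. As `n ≥ 1`, an
`r × r` matrix is determined by its left action on `M_{r,n}(ℂ)` (`eq_of_forall_mul_eq`), so equality
of the two connections on the derivations `ad γ` is the same as `A' γ = g⁻¹ (A γ) g`.

For the converse, the connections have to agree on every derivation. This uses that each
derivation of `M_n(ℂ)` is `ad γ` with `γ` traceless (`exists_traceless_ad`).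
-/

open LinearMap Matrix

/-- A derivation of a unital associative ℂ-algebra `A`. -/
def IsDerivation {A : Type*} [Ring A] [Algebra ℂ A] (X : A →ₗ[ℂ] A) : Prop :=
  ∀ a b : A, X (a * b) = X a * b + a * X b

/-- The Lie algebra of derivations of `A` (as a subtype of linear maps). -/
abbrev Der (A : Type*) [Ring A] [Algebra ℂ A] := {X : A →ₗ[ℂ] A // IsDerivation X}

/-- The inner derivation `ad_γ : a ↦ γ*a - a*γ`. -/
def ad {A : Type*} [Ring A] [Algebra ℂ A] (γ : A) : A →ₗ[ℂ] A :=
  LinearMap.mulLeft ℂ γ - LinearMap.mulRight ℂ γ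

theorem isDerivation_ad {R : Type*} [Ring R] [Algebra ℂ R] (γ : R) : IsDerivation (ad γ) := by
  intro a b
  simp only [ad, LinearMap.sub_apply, LinearMap.mulLeft_apply, LinearMap.mulRight_apply]
  noncomm_ring

/-- Right multiplication by `E_{i z}` moves column `i` of `m` to column `z`; this expands the result
in the matrix units of column `z`. -/
theorem mul_single_eq_sum {r n : ℕ} (z : Fin n) (m : Matrix (Fin r) (Fin n) ℂ) (i : Fin n) :
    m * single i z (1 : ℂ) = ∑ l, m l i • single l z (1 : ℂ) := by
  ext k j
  simp only [Matrix.mul_apply, Matrix.sum_apply, Matrix.smul_apply, Matrix.single_apply, smul_eq_mul]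
  by_cases h : z = j <;> simp [h]

/-- The row version: left multiplication by `E_{z i}` moves row `i` of `m` to row `z`. -/
theorem single_mul_eq_sum {n : ℕ} (z : Fin n) (m : Matrix (Fin n) (Fin n) ℂ) (i : Fin n) :
    single z i (1 : ℂ) * m = ∑ l, m i l • single z l (1 : ℂ) := by
  ext k j
  simp only [Matrix.mul_apply, Matrix.sum_apply, Matrix.smul_apply, Matrix.single_apply, smul_eq_mul]
  by_cases h : z = k <;> simp [h]

/-- Every derivation of `M_n(ℂ)` is inner, implemented by
`γ = ∑ i, X (E_{i z}) E_{z i}` for any fixed index `z`. -/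
theorem exists_ad {n : ℕ} (z : Fin n) (X : Matrix (Fin n) (Fin n) ℂ →ₗ[ℂ] Matrix (Fin n) (Fin n) ℂ)
    (hX : IsDerivation X) : ∃ γ, X = ad γ := by
  refine ⟨∑ i, X (single i z 1) * single z i 1, LinearMap.ext fun a => ?_⟩
  have hone : ∑ i : Fin n, single i z (1 : ℂ) * single z i (1 : ℂ) = 1 := by
    simp only [single_mul_single_same, mul_one]
    ext i j
    by_cases h : i = j
    · simp [Matrix.sum_apply, Matrix.single_apply, Matrix.one_apply, h]
    · have h' : ∀ c : Fin n, ¬(c = i ∧ c = j) := fun c hc => h (hc.1.symm.trans hc.2)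
      simp [Matrix.sum_apply, Matrix.single_apply, Matrix.one_apply, h, h']
  -- Both sides of this identity are `∑ i, X (a E_{i z}) E_{z i}`.
  have key : X a + a * ∑ i, X (single i z 1) * single z i 1
      = (∑ i, X (single i z 1) * single z i 1) * a := by
    calc X a + a * ∑ i, X (single i z 1) * single z i 1
        = ∑ i, X (a * single i z 1) * single z i 1 := by
          conv_lhs => rw [← mul_one (X a), ← hone]
          rw [Finset.mul_sum, Finset.mul_sum, ← Finset.sum_add_distrib]
          refine Finset.sum_congr rfl fun i _ => ?_
          rw [hX]
          noncomm_ring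
      _ = _ := by
          simp_rw [mul_single_eq_sum z a, map_sum, map_smul, Finset.sum_mul, Matrix.mul_assoc,
            single_mul_eq_sum z a, Finset.mul_sum, smul_mul_assoc, mul_smul_comm]
          exact Finset.sum_comm
  simp only [ad, LinearMap.sub_apply, LinearMap.mulLeft_apply, LinearMap.mulRight_apply]
  rw [← key, add_sub_cancel_right]

/-- The implementing matrix can be made traceless by subtracting a scalar matrix, which is
central. -/
theorem exists_traceless_ad {n : ℕ} (z : Fin n)
    (X : Matrix (Fin n) (Fin n) ℂ →ₗ[ℂ] Matrix (Fin n) (Fin n) ℂ)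
    (hX : IsDerivation X) : ∃ γ, Matrix.trace γ = 0 ∧ X = ad γ := by
  obtain ⟨γ, rfl⟩ := exists_ad z X hX
  have hn : (n : ℂ) ≠ 0 := Nat.cast_ne_zero.mpr (Fin.pos z).ne'
  refine ⟨γ - (Matrix.trace γ / n) • 1, ?_, LinearMap.ext fun a => ?_⟩
  · rw [Matrix.trace_sub, Matrix.trace_smul, Matrix.trace_one, Fintype.card_fin, smul_eq_mul,
      div_mul_cancel₀ _ hn, sub_self]
  · simp [ad, sub_mul, mul_sub]

/-- A right-module endomorphism of `M_{r,n}(ℂ)` is left multiplication by an `r × r` matrix, whose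
`l`-th column is column `z` of `Φ (E_{l z})`. -/
theorem exists_left_mul {r n : ℕ} (z : Fin n)
    (Φ : Matrix (Fin r) (Fin n) ℂ →ₗ[ℂ] Matrix (Fin r) (Fin n) ℂ)
    (hΦ : ∀ (m : Matrix (Fin r) (Fin n) ℂ) (a : Matrix (Fin n) (Fin n) ℂ), Φ (m * a) = Φ m * a) :
    ∃ g : Matrix (Fin r) (Fin r) ℂ, ∀ m, Φ m = g * m := by
  refine ⟨Matrix.of fun k l => Φ (single l z 1) k z, fun m => ?_⟩
  ext k i
  have h := congrFun (congrFun (hΦ m (single i z 1)) k) z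
  rw [mul_single_eq_sum] at h
  simp only [map_sum, map_smul] at h
  have h2 : (Φ m * single i z (1 : ℂ)) k z = Φ m k i := by simp
  rw [h2] at h
  rw [← h, Matrix.sum_apply, Matrix.mul_apply]
  exact Finset.sum_congr rfl fun l _ => by
    rw [Matrix.smul_apply, smul_eq_mul, mul_comm, Matrix.of_apply]

theorem eq_of_forall_mul_eq {r n : ℕ} (z : Fin n) {M N : Matrix (Fin r) (Fin r) ℂ}
    (h : ∀ m : Matrix (Fin r) (Fin n) ℂ, M * m = N * m) : M = N := by
  ext k l
  simpa using congrFun (congrFun (h (single l z 1)) k) z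

/-- Two flat noncommutative connections `∇_{ad_γ} m = −m·γ + A(γ)·m` and
`∇'_{ad_γ} m = −m·γ + A'(γ)·m` on the right `M_n(ℂ)`-module `M_{r,n}(ℂ)`,
associated to Lie algebra homomorphisms `A, A' : sl(n,ℂ) → M_r(ℂ)`, are in the
same gauge orbit if and only if the representations `A` and `A'` are
equivalent: `A'(γ) = g⁻¹ A(γ) g` for some `g ∈ GL_r(ℂ)` and all traceless `γ`. -/
theorem flat_connections_gauge_orbits {n r : ℕ} (hn : 1 ≤ n) (hr : 1 ≤ r)
    (A A' : Matrix (Fin n) (Fin n) ℂ → Matrix (Fin r) (Fin r) ℂ)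
    (hAlin : ∀ (c : ℂ) (γ η : Matrix (Fin n) (Fin n) ℂ),
      Matrix.trace γ = 0 → Matrix.trace η = 0 → A (c • γ + η) = c • A γ + A η)
    (hA'lin : ∀ (c : ℂ) (γ η : Matrix (Fin n) (Fin n) ℂ),
      Matrix.trace γ = 0 → Matrix.trace η = 0 → A' (c • γ + η) = c • A' γ + A' η)
    (hAhom : ∀ γ η : Matrix (Fin n) (Fin n) ℂ,
      Matrix.trace γ = 0 → Matrix.trace η = 0 →
      A (γ * η - η * γ) = A γ * A η - A η * A γ)
    (hA'hom : ∀ γ η : Matrix (Fin n) (Fin n) ℂ,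
      Matrix.trace γ = 0 → Matrix.trace η = 0 →
      A' (γ * η - η * γ) = A' γ * A' η - A' η * A' γ)
    (conn conn' : Der (Matrix (Fin n) (Fin n) ℂ) →
      Matrix (Fin r) (Fin n) ℂ → Matrix (Fin r) (Fin n) ℂ)
    (hconn : ∀ γ : Matrix (Fin n) (Fin n) ℂ, Matrix.trace γ = 0 →
      ∀ X : Der (Matrix (Fin n) (Fin n) ℂ), X.1 = ad γ →
        ∀ m, conn X m = -(m * γ) + A γ * m)
    (hconn' : ∀ γ : Matrix (Fin n) (Fin n) ℂ, Matrix.trace γ = 0 →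
      ∀ X : Der (Matrix (Fin n) (Fin n) ℂ), X.1 = ad γ →
        ∀ m, conn' X m = -(m * γ) + A' γ * m) :
    (∃ Φ : Matrix (Fin r) (Fin n) ℂ ≃ₗ[ℂ] Matrix (Fin r) (Fin n) ℂ,
      (∀ (m : Matrix (Fin r) (Fin n) ℂ) (a : Matrix (Fin n) (Fin n) ℂ),
        Φ (m * a) = Φ m * a) ∧
      (∀ (X : Der (Matrix (Fin n) (Fin n) ℂ)) (m : Matrix (Fin r) (Fin n) ℂ),
        conn' X m = Φ.symm (conn X (Φ m)))) ↔
    (∃ g : (Matrix (Fin r) (Fin r) ℂ)ˣ,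
      ∀ γ : Matrix (Fin n) (Fin n) ℂ, Matrix.trace γ = 0 →
        A' γ = (↑g⁻¹ : Matrix (Fin r) (Fin r) ℂ) * A γ
          * (g : Matrix (Fin r) (Fin r) ℂ)) := by
  have z : Fin n := ⟨0, hn⟩
  constructor
  · rintro ⟨Φ, hΦ, hc⟩
    have hΨ : ∀ (m : Matrix (Fin r) (Fin n) ℂ) (a : Matrix (Fin n) (Fin n) ℂ),
        Φ.symm (m * a) = Φ.symm m * a := by
      intro m a
      rw [LinearEquiv.symm_apply_eq, hΦ, LinearEquiv.apply_symm_apply]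
    obtain ⟨g, hg⟩ := exists_left_mul z Φ.toLinearMap hΦ
    obtain ⟨h, hh⟩ := exists_left_mul z Φ.symm.toLinearMap hΨ
    simp only [LinearEquiv.coe_coe] at hg hh
    have hgh : g * h = 1 := eq_of_forall_mul_eq z fun m => by
      rw [Matrix.mul_assoc, ← hh, ← hg, LinearEquiv.apply_symm_apply, Matrix.one_mul]
    have hhg : h * g = 1 := eq_of_forall_mul_eq z fun m => by
      rw [Matrix.mul_assoc, ← hg, ← hh, LinearEquiv.symm_apply_apply, Matrix.one_mul]
    refine ⟨⟨g, h, hgh, hhg⟩, fun γ hγ => eq_of_forall_mul_eq z fun m => ?_⟩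
    have e := hc ⟨ad γ, isDerivation_ad γ⟩ m
    rw [hconn γ hγ _ rfl, hconn' γ hγ _ rfl, hh, hg, Matrix.mul_add, Matrix.mul_neg,
      Matrix.mul_assoc g, ← Matrix.mul_assoc h g, hhg, Matrix.one_mul] at e
    simpa [Matrix.mul_assoc] using add_left_cancel e
  · rintro ⟨g, hg⟩
    have hgi : (g : Matrix (Fin r) (Fin r) ℂ) * (↑g⁻¹ : Matrix (Fin r) (Fin r) ℂ) = 1 :=
      g.mul_inv
    have hig : (↑g⁻¹ : Matrix (Fin r) (Fin r) ℂ) * (g : Matrix (Fin r) (Fin r) ℂ) = 1 :=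
      g.inv_mul
    refine ⟨{ toFun := fun m => (g : Matrix (Fin r) (Fin r) ℂ) * m
              invFun := fun m => (↑g⁻¹ : Matrix (Fin r) (Fin r) ℂ) * m
              map_add' := fun _ _ => Matrix.mul_add _ _ _
              map_smul' := fun _ _ => Matrix.mul_smul _ _ _
              left_inv := fun m => by
                simp only [← Matrix.mul_assoc, hig, Matrix.one_mul]
              right_inv := fun m => by
                simp only [← Matrix.mul_assoc, hgi, Matrix.one_mul] },
      fun m a => (Matrix.mul_assoc (g : Matrix (Fin r) (Fin r) ℂ) m a).symm, fun X m => ?_⟩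
    obtain ⟨γ, hγ, hX⟩ := exists_traceless_ad z X.1 X.2
    rw [hconn' γ hγ X hX, hconn γ hγ X hX, hg γ hγ]
    change _ = (↑g⁻¹ : Matrix (Fin r) (Fin r) ℂ) *
      (-((g : Matrix (Fin r) (Fin r) ℂ) * m * γ) + A γ * ((g : Matrix (Fin r) (Fin r) ℂ) * m))
    rw [Matrix.mul_add, Matrix.mul_neg, Matrix.mul_assoc (g : Matrix (Fin r) (Fin r) ℂ),
      ← Matrix.mul_assoc _ (g : Matrix (Fin r) (Fin r) ℂ) (m * γ), hig, Matrix.one_mul]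
    simp only [Matrix.mul_assoc]
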